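/- arXiv:1303.6898 — 2 statements merged into one kernel-verified Lean document; each statement's English description precedes it below -/
import Mathlib

section
/- Every eigenvalue of the discontinuous Sturm–Liouville problem with transmission conditions is real: if (λ, y) is an eigenpair, then λ ∈ ℝ. -/
open Real MeasureTheory intervalIntegral

/-!
For a solution `y` of `-y'' + q y = lam y` with real `q`, the quantity `Im (conj y * y')` has
derivative `-Im lam * |y|²` (Lagrange's identity). It vanishes where a real separated boundary
condition holds, and by the transmission conditions `ρ₁₂` times its left value at the interface
equals `ρ₃₄` times its right value. Integrating over both intervals thus gives
`Im lam * (ρ₁₂ ∫ |y₁|² + ρ₃₄ ∫ |y₂|²) = 0`, where the second factor is the squared norm of `y` in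
the weighted `L²` space in which the problem is symmetric.
-/

open Set
open scoped ComplexConjugate

/-- The Wronskian `conj y * y' - conj y' * y` of a function and its conjugate, divided by `2i` so as
to be real, in terms of the values `u = y x` and `v = y' x`. It is the boundary term in Lagrange's
identity. -/
def conjWronskian (u v : ℂ) : ℝ :=
  (conj u * v).im

lemma conjWronskian_neg_neg (u v : ℂ) : conjWronskian (-u) (-v) = conjWronskian u v := by
  simp only [conjWronskian, map_neg, neg_mul_neg]

-- `conjWronskian` is the area form of `ℂ = ℝ²`, so real combinations scale it by a determinant.
lemma conjWronskian_linear_combination (a₁ a₂ b₁ b₂ : ℝ) (u v : ℂ) :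
    conjWronskian (b₁ * v + b₂ * u) (a₁ * v + a₂ * u) =
      (a₁ * b₂ - a₂ * b₁) * conjWronskian u v := by
  simp only [conjWronskian, map_add, map_mul, Complex.conj_ofReal, Complex.mul_re, Complex.mul_im,
    Complex.add_re, Complex.add_im, Complex.ofReal_re, Complex.ofReal_im, Complex.conj_re,
    Complex.conj_im]
  ring

lemma conjWronskian_eq_zero_of_boundary_condition {c d : ℝ} (hcd : c ^ 2 + d ^ 2 ≠ 0) {u v : ℂ}
    (h : (c : ℂ) * u + d * v = 0) : conjWronskian u v = 0 := by
  have hdet := conjWronskian_linear_combination d c (-c) d u v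
  rw [add_comm ((d : ℂ) * v), h] at hdet
  have hzero : (c ^ 2 + d ^ 2) * conjWronskian u v = 0 := by
    rw [conjWronskian, mul_zero, Complex.zero_im] at hdet
    linear_combination -hdet
  exact (mul_eq_zero.mp hzero).resolve_left hcd

lemma conjWronskian_transmission {a₁ a₂ a₃ a₄ b₁ b₂ b₃ b₄ : ℝ} {u₁ v₁ u₂ v₂ : ℂ}
    (ha : (a₁ : ℂ) * v₁ + a₂ * u₁ + a₃ * v₂ + a₄ * u₂ = 0)
    (hb : (b₁ : ℂ) * v₁ + b₂ * u₁ + b₃ * v₂ + b₄ * u₂ = 0) :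
    (a₁ * b₂ - a₂ * b₁) * conjWronskian u₁ v₁ = (a₃ * b₄ - a₄ * b₃) * conjWronskian u₂ v₂ := by
  have ha' : (a₁ : ℂ) * v₁ + a₂ * u₁ = -(a₃ * v₂ + a₄ * u₂) := by linear_combination ha
  have hb' : (b₁ : ℂ) * v₁ + b₂ * u₁ = -(b₃ * v₂ + b₄ * u₂) := by linear_combination hb
  rw [← conjWronskian_linear_combination, ha', hb', conjWronskian_neg_neg,
    conjWronskian_linear_combination]

lemma hasDerivWithinAt_conjWronskian {u v : ℝ → ℂ} {u' v' : ℂ} {s : Set ℝ} {x : ℝ}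
    (hu : HasDerivWithinAt u u' s x) (hv : HasDerivWithinAt v v' s x) :
    HasDerivWithinAt (fun t => conjWronskian (u t) (v t))
      (conjWronskian u' (v x) + conjWronskian (u x) v') s x :=
  Complex.imCLM.hasFDerivAt.comp_hasDerivWithinAt x (hu.star.mul hv)

lemma intervalIntegral_norm_sq_pos {E : Type*} [NormedAddCommGroup E] {f : ℝ → E} {a b : ℝ}
    (hab : a < b) (hf : ContinuousOn f (Icc a b)) (hne : ∃ x ∈ Icc a b, f x ≠ 0) :
    0 < ∫ x in a..b, ‖f x‖ ^ 2 := by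
  obtain ⟨x, hx, hfx⟩ := hne
  exact integral_pos hab (hf.norm.pow 2) (fun _ _ => by positivity) ⟨x, hx, by positivity⟩

lemma weighted_integral_norm_sq_pos {E F : Type*} [NormedAddCommGroup E] [NormedAddCommGroup F]
    {f : ℝ → E} {g : ℝ → F} {a b c d p r : ℝ} (hab : a < b) (hcd : c < d) (hp : 0 < p) (hr : 0 < r)
    (hf : ContinuousOn f (Icc a b)) (hg : ContinuousOn g (Icc c d))
    (hne : ¬ ((∀ x ∈ Icc a b, f x = 0) ∧ (∀ x ∈ Icc c d, g x = 0))) :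
    0 < p * (∫ x in a..b, ‖f x‖ ^ 2) + r * ∫ x in c..d, ‖g x‖ ^ 2 := by
  have hf_nonneg : 0 ≤ ∫ x in a..b, ‖f x‖ ^ 2 := integral_nonneg hab.le fun _ _ => by positivity
  have hg_nonneg : 0 ≤ ∫ x in c..d, ‖g x‖ ^ 2 := integral_nonneg hcd.le fun _ _ => by positivity
  rw [not_and_or] at hne
  push Not at hne
  rcases hne with hf_ne | hg_ne
  · have hf_pos := intervalIntegral_norm_sq_pos hab hf hf_ne
    positivity
  · have hg_pos := intervalIntegral_norm_sq_pos hcd hg hg_ne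
    positivity

/-- `y` solves `-y'' + q y = lam y` on `s`, with first derivative `y'`; derivatives are taken within
`s`, hence one-sided at the endpoints of an interval. The second derivative is eliminated using the
equation. -/
structure IsSturmLiouvilleSolutionOn (q : ℝ → ℝ) (lam : ℂ) (s : Set ℝ) (y y' : ℝ → ℂ) :
    Prop where
  hasDerivWithinAt : ∀ x ∈ s, HasDerivWithinAt y (y' x) s x
  hasDerivWithinAt_deriv : ∀ x ∈ s, HasDerivWithinAt y' ((q x - lam) * y x) s x

namespace IsSturmLiouvilleSolutionOn

variable {q : ℝ → ℝ} {lam : ℂ} {s : Set ℝ} {y y' : ℝ → ℂ}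

lemma of_hasDerivAt {y'' : ℝ → ℂ} (hy : ∀ x ∈ s, HasDerivAt y (y' x) x)
    (hy' : ∀ x ∈ s, HasDerivAt y' (y'' x) x)
    (heq : ∀ x ∈ s, -y'' x + (q x : ℂ) * y x = lam * y x) :
    IsSturmLiouvilleSolutionOn q lam s y y' where
  hasDerivWithinAt x hx := (hy x hx).hasDerivWithinAt
  hasDerivWithinAt_deriv x hx :=
    (hy' x hx).hasDerivWithinAt.congr_deriv (by linear_combination -heq x hx)

lemma continuousOn (h : IsSturmLiouvilleSolutionOn q lam s y y') : ContinuousOn y s :=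
  fun x hx => (h.hasDerivWithinAt x hx).continuousWithinAt

lemma lagrange_identity (h : IsSturmLiouvilleSolutionOn q lam s y y') {x : ℝ}
    (hx : x ∈ s) :
    HasDerivWithinAt (fun t => conjWronskian (y t) (y' t)) (-lam.im * ‖y x‖ ^ 2) s x := by
  refine (hasDerivWithinAt_conjWronskian (h.hasDerivWithinAt x hx)
    (h.hasDerivWithinAt_deriv x hx)).congr_deriv ?_
  simp only [conjWronskian, ← Complex.normSq_eq_norm_sq, Complex.normSq_apply, Complex.mul_im,
    Complex.mul_re, Complex.sub_re, Complex.sub_im, Complex.ofReal_re, Complex.ofReal_im,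
    Complex.conj_re, Complex.conj_im]
  ring

theorem im_mul_integral_norm_sq {a b : ℝ} (hab : a ≤ b)
    (h : IsSturmLiouvilleSolutionOn q lam (Icc a b) y y') :
    lam.im * ∫ x in a..b, ‖y x‖ ^ 2 =
      conjWronskian (y a) (y' a) - conjWronskian (y b) (y' b) := by
  have hint : IntervalIntegrable (fun x => -lam.im * ‖y x‖ ^ 2) volume a b :=
    (continuousOn_const.mul (h.continuousOn.norm.pow 2)).intervalIntegrable_of_Icc hab
  have hftc : ∫ x in a..b, -lam.im * ‖y x‖ ^ 2 =
      conjWronskian (y b) (y' b) - conjWronskian (y a) (y' a) :=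
    integral_eq_sub_of_hasDerivAt_of_le hab
      (fun x hx => (h.lagrange_identity hx).continuousWithinAt)
      (fun x hx => (h.lagrange_identity (Ioo_subset_Icc_self hx)).hasDerivAt
        (Icc_mem_nhds hx.1 hx.2)) hint
  rw [intervalIntegral.integral_const_mul] at hftc
  linear_combination -hftc

end IsSturmLiouvilleSolutionOn

theorem eigenvalues_real_of_transmission_sturm_liouville_general
    {q : ℝ → ℝ} {a b c : ℝ} (hac : a < c) (hcb : c < b)
    {a₁ a₂ a₃ a₄ b₁ b₂ b₃ b₄ α β : ℝ}
    (hρ : 0 < (a₁ * b₂ - a₂ * b₁) * (a₃ * b₄ - a₄ * b₃))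
    {lam : ℂ} {y₁ y₁' y₂ y₂' : ℝ → ℂ}
    (hy₁ : IsSturmLiouvilleSolutionOn q lam (Icc a c) y₁ y₁')
    (hy₂ : IsSturmLiouvilleSolutionOn q lam (Icc c b) y₂ y₂')
    (hΓ₁ : (a₁ : ℂ) * y₁' c + a₂ * y₁ c + a₃ * y₂' c + a₄ * y₂ c = 0)
    (hΓ₂ : (b₁ : ℂ) * y₁' c + b₂ * y₁ c + b₃ * y₂' c + b₄ * y₂ c = 0)
    (hΓ₃ : (Real.cos α : ℂ) * y₁ a + (Real.sin α : ℂ) * y₁' a = 0)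
    (hΓ₄ : (Real.cos β : ℂ) * y₂ b + (Real.sin β : ℂ) * y₂' b = 0)
    (hne : ¬ ((∀ x ∈ Icc a c, y₁ x = 0) ∧ (∀ x ∈ Icc c b, y₂ x = 0))) :
    lam.im = 0 := by
  set ρ₁₂ := a₁ * b₂ - a₂ * b₁
  set ρ₃₄ := a₃ * b₄ - a₄ * b₃
  set I₁ := ∫ x in a..c, ‖y₁ x‖ ^ 2
  set I₂ := ∫ x in c..b, ‖y₂ x‖ ^ 2
  have hinterface : ρ₁₂ * conjWronskian (y₁ c) (y₁' c) = ρ₃₄ * conjWronskian (y₂ c) (y₂' c) :=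
    conjWronskian_transmission hΓ₁ hΓ₂
  have hleft : conjWronskian (y₁ a) (y₁' a) = 0 :=
    conjWronskian_eq_zero_of_boundary_condition (by simp) hΓ₃
  have hright : conjWronskian (y₂ b) (y₂' b) = 0 :=
    conjWronskian_eq_zero_of_boundary_condition (by simp) hΓ₄
  have hsum : lam.im * (ρ₁₂ ^ 2 * I₁ + ρ₁₂ * ρ₃₄ * I₂) = 0 := by
    linear_combination ρ₁₂ ^ 2 * (hy₁.im_mul_integral_norm_sq hac.le) +
      ρ₁₂ * ρ₃₄ * (hy₂.im_mul_integral_norm_sq hcb.le) - ρ₁₂ * hinterface +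
      ρ₁₂ ^ 2 * hleft - ρ₁₂ * ρ₃₄ * hright
  have hpos : 0 < ρ₁₂ ^ 2 * I₁ + ρ₁₂ * ρ₃₄ * I₂ :=
    weighted_integral_norm_sq_pos hac hcb (sq_pos_of_ne_zero (left_ne_zero_of_mul hρ.ne')) hρ
      hy₁.continuousOn hy₂.continuousOn hne
  exact (mul_eq_zero.mp hsum).resolve_right hpos.ne'

/-- Every eigenvalue of the discontinuous Sturm–Liouville problem with
transmission conditions is real: if `(lam, y)` is an eigenpair (with `y = (y₁, y₂)`
nonzero, C² on each subinterval, satisfying `Γy = lam • y` on both subintervals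
and the transmission and boundary conditions), then `lam` is real. -/
theorem eigenvalues_real_of_transmission_sturm_liouville
    (q : ℝ → ℝ) (hq : ContinuousOn q (Set.Icc (-π) π))
    (a₁ a₂ a₃ a₄ b₁ b₂ b₃ b₄ α β : ℝ)
    (hρ₁₂ : 0 < a₁ * b₂ - a₂ * b₁) (hρ₃₄ : 0 < a₃ * b₄ - a₄ * b₃)
    (lam : ℂ)
    (y₁ y₁' y₁'' y₂ y₂' y₂'' : ℝ → ℂ)
    (hy₁d : ∀ x ∈ Set.Icc (-π) 0, HasDerivAt y₁ (y₁' x) x)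
    (hy₁d2 : ∀ x ∈ Set.Icc (-π) 0, HasDerivAt y₁' (y₁'' x) x)
    (hy₁c : ContinuousOn y₁'' (Set.Icc (-π) 0))
    (hy₂d : ∀ x ∈ Set.Icc 0 π, HasDerivAt y₂ (y₂' x) x)
    (hy₂d2 : ∀ x ∈ Set.Icc 0 π, HasDerivAt y₂' (y₂'' x) x)
    (hy₂c : ContinuousOn y₂'' (Set.Icc 0 π))
    (heq₁ : ∀ x ∈ Set.Icc (-π) 0, -y₁'' x + (q x : ℂ) * y₁ x = lam * y₁ x)
    (heq₂ : ∀ x ∈ Set.Icc 0 π, -y₂'' x + (q x : ℂ) * y₂ x = lam * y₂ x)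
    (hΓ₁ : (a₁ : ℂ) * y₁' 0 + (a₂ : ℂ) * y₁ 0 + (a₃ : ℂ) * y₂' 0 + (a₄ : ℂ) * y₂ 0 = 0)
    (hΓ₂ : (b₁ : ℂ) * y₁' 0 + (b₂ : ℂ) * y₁ 0 + (b₃ : ℂ) * y₂' 0 + (b₄ : ℂ) * y₂ 0 = 0)
    (hΓ₃ : (Real.cos α : ℂ) * y₁ (-π) + (Real.sin α : ℂ) * y₁' (-π) = 0)
    (hΓ₄ : (Real.cos β : ℂ) * y₂ π + (Real.sin β : ℂ) * y₂' π = 0)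
    (hne : ¬ ((∀ x ∈ Set.Icc (-π) 0, y₁ x = 0) ∧ (∀ x ∈ Set.Icc 0 π, y₂ x = 0))) :
    lam.im = 0 := by
  exact eigenvalues_real_of_transmission_sturm_liouville_general (neg_lt_zero.mpr pi_pos) pi_pos
    (mul_pos hρ₁₂ hρ₃₄) (.of_hasDerivAt hy₁d hy₁d2 heq₁) (.of_hasDerivAt hy₂d hy₂d2 heq₂)
    hΓ₁ hΓ₂ hΓ₃ hΓ₄ hne
end

section
/- If two functions y = (y₁, y₂) and z = (z₁, z₂) both satisfy the transmission conditions Γ₁ = Γ₂ = 0, then the weighted Wronskians with conjugate at the interior point match: ρ₁₂·(y₁(0)·conj(z₁'(0)) - y₁'(0)·conj(z₁(0))) = ρ₃₄·(y₂(0)·conj(z₂'(0)) - y₂'(0)·conj(z₂(0))). -/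
/-!
Since `z` solves conditions with real coefficients, so does its conjugate. Thus the two-column
matrices `U`, `V` of left and right Cauchy data of `conj z` and `y` satisfy `A * U + B * V = 0`,
where `A` and `B` are the 2×2 blocks of coefficients. The Wronskians are the determinants of `U`
and `V`, and taking determinants in `A * U = -(B * V)` loses the sign because the size is even.
-/

open Real

open Matrix ComplexConjugate

theorem det_mul_det_eq_of_mul_add_mul_eq_zero {n R : Type*} [Fintype n] [DecidableEq n]
    [CommRing R] (hn : Even (Fintype.card n)) {A B U V : Matrix n n R}
    (h : A * U + B * V = 0) : A.det * U.det = B.det * V.det := by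
  calc
    A.det * U.det = (A * U).det := (det_mul A U).symm
    _ = (-(B * V)).det := by rw [eq_neg_of_add_eq_zero_left h]
    _ = B.det * V.det := by rw [det_neg, hn.neg_one_pow, one_mul, det_mul]

/-- The Plücker coordinate `pᵢⱼ` of the pair `(u, v)`, i.e. the minor of its columns `i` and `j`.
It stands both for the weights `ρᵢⱼ` of a pair of coefficient vectors and, up to sign, for the
Wronskians of a pair of vectors of Cauchy data `(y₁', y₁, y₂', y₂)`. Indices in `Fin 4` start
at `0`, so `ρ₁₂` is `pluckerCoord a b 0 1`. -/
def pluckerCoord {ι R : Type*} [CommRing R] (u v : ι → R) (i j : ι) : R :=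
  u i * v j - u j * v i

theorem pluckerCoord_mul_eq_of_dotProduct_eq_zero {R : Type*} [CommRing R]
    {a b u v : Fin 4 → R} (hau : a ⬝ᵥ u = 0) (hbu : b ⬝ᵥ u = 0)
    (hav : a ⬝ᵥ v = 0) (hbv : b ⬝ᵥ v = 0) :
    pluckerCoord a b 0 1 * pluckerCoord u v 0 1 =
      pluckerCoord a b 2 3 * pluckerCoord u v 2 3 := by
  have blocks : !![a 0, a 1; b 0, b 1] * !![u 0, v 0; u 1, v 1] +
      !![a 2, a 3; b 2, b 3] * !![u 2, v 2; u 3, v 3] = 0 := by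
    simp only [dotProduct, Fin.sum_univ_four, add_assoc] at hau hbu hav hbv
    ext i j
    fin_cases i <;> fin_cases j <;> simp [add_assoc, hau, hbu, hav, hbv]
  have dets := det_mul_det_eq_of_mul_add_mul_eq_zero (by simp) blocks
  simpa only [pluckerCoord, det_fin_two_of, mul_comm (v _) (u _)] using dets

theorem dotProduct_star_eq_zero {n R : Type*} [Fintype n] [NonUnitalCommSemiring R]
    [StarRing R] {a u : n → R} (ha : IsSelfAdjoint a) (h : a ⬝ᵥ u = 0) : a ⬝ᵥ star u = 0 := by
  rw [← ha.star_eq, star_dotProduct_star, dotProduct_comm, h, star_zero]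

theorem weighted_wronskians_match_at_interior_point_general {𝕜 : Type*} [RCLike 𝕜]
    {a₁ a₂ a₃ a₄ b₁ b₂ b₃ b₄ c : ℝ} {y₁ y₂ z₁ z₂ : ℝ → 𝕜} {y₁' y₂' z₁' z₂' : 𝕜}
    (hy₁ : HasDerivWithinAt y₁ y₁' (Set.Iic c) c) (hy₂ : HasDerivWithinAt y₂ y₂' (Set.Ici c) c)
    (hz₁ : HasDerivWithinAt z₁ z₁' (Set.Iic c) c) (hz₂ : HasDerivWithinAt z₂ z₂' (Set.Ici c) c)
    (hΓ₁y : (a₁ : 𝕜) * y₁' + a₂ * y₁ c + a₃ * y₂' + a₄ * y₂ c = 0)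
    (hΓ₂y : (b₁ : 𝕜) * y₁' + b₂ * y₁ c + b₃ * y₂' + b₄ * y₂ c = 0)
    (hΓ₁z : (a₁ : 𝕜) * z₁' + a₂ * z₁ c + a₃ * z₂' + a₄ * z₂ c = 0)
    (hΓ₂z : (b₁ : 𝕜) * z₁' + b₂ * z₁ c + b₃ * z₂' + b₄ * z₂ c = 0) :
    ((a₁ * b₂ - a₂ * b₁ : ℝ) : 𝕜) * (y₁ c * conj z₁' - y₁' * conj (z₁ c)) =
      ((a₃ * b₄ - a₄ * b₃ : ℝ) : 𝕜) * (y₂ c * conj z₂' - y₂' * conj (z₂ c)) := by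
  let a : Fin 4 → 𝕜 := (↑) ∘ ![a₁, a₂, a₃, a₄]
  let b : Fin 4 → 𝕜 := (↑) ∘ ![b₁, b₂, b₃, b₄]
  let y : Fin 4 → 𝕜 := ![y₁', y₁ c, y₂', y₂ c]
  let z : Fin 4 → 𝕜 := ![z₁', z₁ c, z₂', z₂ c]
  have a_real : IsSelfAdjoint a := funext fun _ ↦ RCLike.conj_ofReal _
  have b_real : IsSelfAdjoint b := funext fun _ ↦ RCLike.conj_ofReal _
  have hay : a ⬝ᵥ y = 0 := by simpa [a, y, dotProduct, Fin.sum_univ_four] using hΓ₁y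
  have hby : b ⬝ᵥ y = 0 := by simpa [b, y, dotProduct, Fin.sum_univ_four] using hΓ₂y
  have haz : a ⬝ᵥ z = 0 := by simpa [a, z, dotProduct, Fin.sum_univ_four] using hΓ₁z
  have hbz : b ⬝ᵥ z = 0 := by simpa [b, z, dotProduct, Fin.sum_univ_four] using hΓ₂z
  have plucker := pluckerCoord_mul_eq_of_dotProduct_eq_zero
    (dotProduct_star_eq_zero a_real haz) (dotProduct_star_eq_zero b_real hbz) hay hby
  simpa [pluckerCoord, a, b, y, z, mul_comm (conj _)] using plucker

/-- If two pairs `y = (y₁, y₂)` and `z = (z₁, z₂)` of differentiable functions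
both satisfy the transmission conditions `Γ₁ = Γ₂ = 0`, then the weighted
Wronskians with conjugate at the interior point `0` agree:
`ρ₁₂ · W(y₁, conj z₁; 0) = ρ₃₄ · W(y₂, conj z₂; 0)`. -/
theorem weighted_wronskians_match_at_interior_point
    (a₁ a₂ a₃ a₄ b₁ b₂ b₃ b₄ : ℝ)
    (hρ₁₂ : 0 < a₁ * b₂ - a₂ * b₁) (hρ₃₄ : 0 < a₃ * b₄ - a₄ * b₃)
    (y₁ y₁' y₂ y₂' z₁ z₁' z₂ z₂' : ℝ → ℂ)
    (hy₁d : ∀ x ∈ Set.Icc (-π) 0, HasDerivAt y₁ (y₁' x) x)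
    (hy₂d : ∀ x ∈ Set.Icc 0 π, HasDerivAt y₂ (y₂' x) x)
    (hz₁d : ∀ x ∈ Set.Icc (-π) 0, HasDerivAt z₁ (z₁' x) x)
    (hz₂d : ∀ x ∈ Set.Icc 0 π, HasDerivAt z₂ (z₂' x) x)
    (hΓ₁y : (a₁ : ℂ) * y₁' 0 + (a₂ : ℂ) * y₁ 0 + (a₃ : ℂ) * y₂' 0 + (a₄ : ℂ) * y₂ 0 = 0)
    (hΓ₂y : (b₁ : ℂ) * y₁' 0 + (b₂ : ℂ) * y₁ 0 + (b₃ : ℂ) * y₂' 0 + (b₄ : ℂ) * y₂ 0 = 0)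
    (hΓ₁z : (a₁ : ℂ) * z₁' 0 + (a₂ : ℂ) * z₁ 0 + (a₃ : ℂ) * z₂' 0 + (a₄ : ℂ) * z₂ 0 = 0)
    (hΓ₂z : (b₁ : ℂ) * z₁' 0 + (b₂ : ℂ) * z₁ 0 + (b₃ : ℂ) * z₂' 0 + (b₄ : ℂ) * z₂ 0 = 0) :
    ((a₁ * b₂ - a₂ * b₁ : ℝ) : ℂ) *
        (y₁ 0 * (starRingEnd ℂ) (z₁' 0) - y₁' 0 * (starRingEnd ℂ) (z₁ 0)) =
      ((a₃ * b₄ - a₄ * b₃ : ℝ) : ℂ) *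
        (y₂ 0 * (starRingEnd ℂ) (z₂' 0) - y₂' 0 * (starRingEnd ℂ) (z₂ 0)) := by
  have left : (0 : ℝ) ∈ Set.Icc (-π) 0 := by simp [pi_nonneg]
  have right : (0 : ℝ) ∈ Set.Icc 0 π := by simp [pi_nonneg]
  exact weighted_wronskians_match_at_interior_point_general
    (hy₁d 0 left).hasDerivWithinAt (hy₂d 0 right).hasDerivWithinAt
    (hz₁d 0 left).hasDerivWithinAt (hz₂d 0 right).hasDerivWithinAt hΓ₁y hΓ₂y hΓ₁z hΓ₂z
end
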